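/- Triangle-network witness certificate: on (ℂ^d ⊗ ℂ^d)^{⊗3} with edges labelled 1, 2, 3, define W^Δ = −((d²−1)/2) · Φ_1 ⊗ Φ_2 ⊗ Φ_3 + (1/2) · Σ_{T: ∅ ≠ T ⊊ {1,2,3}} ( ⊗_{e∈T} Φ_e ⊗ ⊗_{e∉T} (I_e − Φ_e) ), and Q = P⁺ ⊗ P⁻ ⊗ Φ + P⁻ ⊗ P⁺ ⊗ Φ. Then 0 ⪯ Q ⪯ I and Q^{Γ_{{1,2}}} ⪯ W^Δ, where Γ_{{1,2}} is the partial transpose of the first ℂ^d factor of edges 1 and 2. -/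

import Mathlib

open Matrix Finset
open scoped ComplexOrder

/-- The projector onto the maximally entangled state on `ℂ^d ⊗ ℂ^d`. -/
noncomputable def phiM (d : ℕ) : Matrix (Fin d × Fin d) (Fin d × Fin d) ℂ :=
  Matrix.of fun p q => if p.1 = p.2 ∧ q.1 = q.2 then (1 : ℂ) / d else 0

/-- The swap operator on `ℂ^d ⊗ ℂ^d`. -/
def swapM (d : ℕ) : Matrix (Fin d × Fin d) (Fin d × Fin d) ℂ :=
  Matrix.of fun p q => if p.1 = q.2 ∧ p.2 = q.1 then (1 : ℂ) else 0

/-- The symmetric projector `P⁺ = (I + V)/2`. -/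
noncomputable def Pplus (d : ℕ) : Matrix (Fin d × Fin d) (Fin d × Fin d) ℂ :=
  (2⁻¹ : ℂ) • (1 + swapM d)

/-- The antisymmetric projector `P⁻ = (I − V)/2`. -/
noncomputable def Pminus (d : ℕ) : Matrix (Fin d × Fin d) (Fin d × Fin d) ℂ :=
  (2⁻¹ : ℂ) • (1 - swapM d)

/-- `P_T = ⊗_{e∈T} Φ_e ⊗ ⊗_{e∉T} (I_e − Φ_e)` on the total space of the network. -/
noncomputable def PT (d : ℕ) (E : Type*) [Fintype E] [DecidableEq E] (T : Finset E) :
    Matrix (E → Fin d × Fin d) (E → Fin d × Fin d) ℂ :=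
  Matrix.of fun x y =>
    ∏ e, if e ∈ T then phiM d (x e) (y e)
         else ((1 : Matrix (Fin d × Fin d) (Fin d × Fin d) ℂ) - phiM d) (x e) (y e)

/-- `Γ_K`: partial transpose of the first `ℂ^d` factor of every edge in `K`. -/
def ptK (d : ℕ) (E : Type*) [DecidableEq E] (K : Finset E)
    (M : Matrix (E → Fin d × Fin d) (E → Fin d × Fin d) ℂ) :
    Matrix (E → Fin d × Fin d) (E → Fin d × Fin d) ℂ :=
  Matrix.of fun x y =>
    M (fun e => if e ∈ K then ((y e).1, (x e).2) else x e)
      (fun e => if e ∈ K then ((x e).1, (y e).2) else y e)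

/-- The triangle-network witness
`W^Δ = −((d²−1)/2)·Φ⊗Φ⊗Φ + (1/2)·Σ_{∅ ≠ T ⊊ {1,2,3}} P_T`. -/
noncomputable def Wtriangle (d : ℕ) :
    Matrix (Fin 3 → Fin d × Fin d) (Fin 3 → Fin d × Fin d) ℂ :=
  (-(((d : ℂ) ^ 2 - 1) / 2)) • Matrix.of (fun x y => ∏ e, phiM d (x e) (y e))
    + (2⁻¹ : ℂ) • ∑ T ∈ Finset.univ.powerset.filter
        (fun T : Finset (Fin 3) => T.Nonempty ∧ T ≠ Finset.univ), PT d (Fin 3) T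

/-- `Q = P⁺ ⊗ P⁻ ⊗ Φ + P⁻ ⊗ P⁺ ⊗ Φ`. -/
noncomputable def Qtriangle (d : ℕ) :
    Matrix (Fin 3 → Fin d × Fin d) (Fin 3 → Fin d × Fin d) ℂ :=
  Matrix.of fun x y =>
    Pplus d (x 0) (y 0) * Pminus d (x 1) (y 1) * phiM d (x 2) (y 2)
      + Pminus d (x 0) (y 0) * Pplus d (x 1) (y 1) * phiM d (x 2) (y 2)

abbrev MM (d : ℕ) := Matrix (Fin d × Fin d) (Fin d × Fin d) ℂ

def TM (d : ℕ) (A : Fin 3 → MM d) :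
    Matrix (Fin 3 → Fin d × Fin d) (Fin 3 → Fin d × Fin d) ℂ :=
  Matrix.of fun x y => ∏ e, A e (x e) (y e)

lemma TM_mul (d : ℕ) (A B : Fin 3 → MM d) :
    TM d A * TM d B = TM d (fun e => A e * B e) := by
  ext x z
  simp only [TM, Matrix.mul_apply, Matrix.of_apply, ← Finset.prod_mul_distrib]
  rw [Finset.prod_univ_sum, Fintype.piFinset_univ]

lemma TM_herm (d : ℕ) (A : Fin 3 → MM d) (h : ∀ e, (A e)ᴴ = A e) : (TM d A)ᴴ = TM d A := by
  ext x z
  simp only [TM, Matrix.conjTranspose_apply, Matrix.of_apply, star_prod]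
  refine Finset.prod_congr rfl fun e _ => ?_
  conv_rhs => rw [← h e]
  rfl

lemma psd_of_proj {n : Type*} [Fintype n] (M : Matrix n n ℂ) (h : Mᴴ = M) (h2 : M * M = M) :
    M.PosSemidef := by
  have := Matrix.posSemidef_conjTranspose_mul_self M
  rwa [h, h2] at this

lemma phi_herm (d : ℕ) : (phiM d)ᴴ = phiM d := by
  ext p q
  simp only [phiM, Matrix.conjTranspose_apply, Matrix.of_apply]
  split_ifs <;> simp_all

lemma phi_idem (d : ℕ) (hd : 2 ≤ d) : phiM d * phiM d = phiM d := by
  have hd0 : (d : ℂ) ≠ 0 := by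
    have : d ≠ 0 := by omega
    exact_mod_cast this
  ext p q
  simp only [phiM, Matrix.mul_apply, Matrix.of_apply, Fintype.sum_prod_type]
  by_cases hp : p.1 = p.2 <;> by_cases hq : q.1 = q.2 <;> simp [hp, hq]
  field_simp

lemma swap_herm (d : ℕ) : (swapM d)ᴴ = swapM d := by
  ext p q
  simp only [swapM, Matrix.conjTranspose_apply, Matrix.of_apply]
  split_ifs <;> simp_all

lemma swap_sq (d : ℕ) : swapM d * swapM d = 1 := by
  ext ⟨a, b⟩ ⟨c, e⟩
  simp only [swapM, Matrix.mul_apply, Matrix.of_apply, Fintype.sum_prod_type, Matrix.one_apply,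
    ite_and, Prod.mk.injEq]
  simp

lemma Pp_herm (d : ℕ) : (Pplus d)ᴴ = Pplus d := by
  simp [Pplus, Matrix.conjTranspose_smul, swap_herm]
lemma Pm_herm (d : ℕ) : (Pminus d)ᴴ = Pminus d := by
  simp [Pminus, Matrix.conjTranspose_smul, swap_herm]
lemma Pp_idem (d : ℕ) : Pplus d * Pplus d = Pplus d := by
  simp only [Pplus, smul_mul_smul_comm, mul_add, add_mul, swap_sq, one_mul, mul_one]
  module
lemma Pm_idem (d : ℕ) : Pminus d * Pminus d = Pminus d := by
  simp only [Pminus, smul_mul_smul_comm, mul_sub, sub_mul, swap_sq, one_mul, mul_one]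
  module
lemma PpPm (d : ℕ) : Pplus d * Pminus d = 0 := by
  simp only [Pplus, Pminus, smul_mul_smul_comm, mul_sub, add_mul, swap_sq, one_mul, mul_one]
  module
lemma PmPp (d : ℕ) : Pminus d * Pplus d = 0 := by
  simp only [Pplus, Pminus, smul_mul_smul_comm, mul_add, sub_mul, swap_sq, one_mul, mul_one]
  module

lemma TM_zero (d : ℕ) (A : Fin 3 → MM d) (e : Fin 3) (h : A e = 0) : TM d A = 0 := by
  ext x y
  simp only [TM, Matrix.of_apply, Matrix.zero_apply]
  exact Finset.prod_eq_zero (Finset.mem_univ e) (by simp [h])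

lemma Q_eq (d : ℕ) : Qtriangle d = TM d ![Pplus d, Pminus d, phiM d]
    + TM d ![Pminus d, Pplus d, phiM d] := by
  ext x y
  simp only [Qtriangle, TM, Matrix.of_apply, Matrix.add_apply, Fin.prod_univ_three]
  rfl

lemma Q_herm (d : ℕ) : (Qtriangle d)ᴴ = Qtriangle d := by
  rw [Q_eq, Matrix.conjTranspose_add, TM_herm, TM_herm] <;>
  · intro e
    fin_cases e <;> simp [Pp_herm, Pm_herm, phi_herm]

lemma Q_idem (d : ℕ) (hd : 2 ≤ d) : Qtriangle d * Qtriangle d = Qtriangle d := by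
  rw [Q_eq, mul_add, add_mul, add_mul]
  simp only [TM_mul]
  have h1 : TM d (fun e => (![Pplus d, Pminus d, phiM d] : Fin 3 → MM d) e
      * (![Pminus d, Pplus d, phiM d] : Fin 3 → MM d) e) = 0 := TM_zero d _ 0 (PpPm d)
  have h2 : TM d (fun e => (![Pminus d, Pplus d, phiM d] : Fin 3 → MM d) e
      * (![Pplus d, Pminus d, phiM d] : Fin 3 → MM d) e) = 0 := TM_zero d _ 0 (PmPp d)
  rw [h1, h2, add_zero, zero_add]
  congr 2 <;> funext e <;> fin_cases e <;> simp [Pp_idem, Pm_idem, phi_idem d hd]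

lemma PT_psd (d : ℕ) (hd : 2 ≤ d) (T : Finset (Fin 3)) : (PT d (Fin 3) T).PosSemidef := by
  have h : PT d (Fin 3) T = TM d (fun e => if e ∈ T then phiM d else 1 - phiM d) := by
    ext x y
    simp only [PT, TM, Matrix.of_apply]
    refine Finset.prod_congr rfl fun e _ => ?_
    split_ifs <;> rfl
  rw [h]
  apply psd_of_proj
  · apply TM_herm
    intro e
    split_ifs <;> simp [phi_herm]
  · rw [TM_mul]
    congr 1
    funext e
    split_ifs
    · exact phi_idem d hd
    · simp [mul_sub, sub_mul, phi_idem d hd]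

lemma filt : Finset.univ.powerset.filter
        (fun T : Finset (Fin 3) => T.Nonempty ∧ T ≠ Finset.univ)
    = {{0}, {1}, {2}, {0,1}, {0,2}, {1,2}} := by decide

lemma swap_pt (d : ℕ) (hd : 2 ≤ d) (p q : Fin d × Fin d) :
    swapM d (q.1, p.2) (p.1, q.2) = d * phiM d p q := by
  have hd0 : (d : ℂ) ≠ 0 := by
    have : d ≠ 0 := by omega
    exact_mod_cast this
  simp only [swapM, phiM, Matrix.of_apply]
  by_cases hp : p.1 = p.2 <;> by_cases hq : q.1 = q.2 <;> simp [hp, hq, hd0, eq_comm] <;> simp_all [eq_comm]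

lemma one_pt (d : ℕ) (p q : Fin d × Fin d) :
    (1 : MM d) (q.1, p.2) (p.1, q.2) = (1 : MM d) p q := by
  obtain ⟨a, b⟩ := p
  obtain ⟨c, e⟩ := q
  simp only [Matrix.one_apply, Prod.mk.injEq, eq_comm]

lemma diff_eq (d : ℕ) (hd : 2 ≤ d) :
    Wtriangle d - ptK d (Fin 3) ({0, 1} : Finset (Fin 3)) (Qtriangle d)
      = (2⁻¹ : ℝ) • (PT d (Fin 3) {0} + PT d (Fin 3) {1} + PT d (Fin 3) {0, 1}) := by
  unfold Wtriangle
  rw [filt, Finset.sum_insert (by decide), Finset.sum_insert (by decide),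
    Finset.sum_insert (by decide), Finset.sum_insert (by decide), Finset.sum_insert (by decide),
    Finset.sum_singleton]
  ext x y
  have a0 := swap_pt d hd (x 0) (y 0)
  have a1 := swap_pt d hd (x 1) (y 1)
  have b0 := one_pt d (x 0) (y 0)
  have b1 := one_pt d (x 1) (y 1)
  have hq : ptK d (Fin 3) ({0, 1} : Finset (Fin 3)) (Qtriangle d) x y =
      Pplus d ((y 0).1, (x 0).2) ((x 0).1, (y 0).2)
          * Pminus d ((y 1).1, (x 1).2) ((x 1).1, (y 1).2) * phiM d (x 2) (y 2)
        + Pminus d ((y 0).1, (x 0).2) ((x 0).1, (y 0).2)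
          * Pplus d ((y 1).1, (x 1).2) ((x 1).1, (y 1).2) * phiM d (x 2) (y 2) := rfl
  rw [Matrix.sub_apply, hq]
  simp only [Pplus, Pminus, Matrix.smul_apply, Matrix.add_apply, Matrix.sub_apply, a0, a1, b0, b1]
  simp [PT, Fin.prod_univ_three]
  ring

theorem stmt_16 (d : ℕ) (hd : 2 ≤ d) :
    (Qtriangle d).PosSemidef ∧ (1 - Qtriangle d).PosSemidef ∧
    (Wtriangle d - ptK d (Fin 3) ({0, 1} : Finset (Fin 3)) (Qtriangle d)).PosSemidef := by
  refine ⟨psd_of_proj _ (Q_herm d) (Q_idem d hd), psd_of_proj _ ?_ ?_, ?_⟩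
  · simp [Q_herm]
  · simp [mul_sub, sub_mul, Q_idem d hd]
  · rw [diff_eq d hd]
    exact (((PT_psd d hd _).add (PT_psd d hd _)).add (PT_psd d hd _)).smul (by norm_num)
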